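/- arXiv:1005.1177 — 4 statements merged into one kernel-verified Lean document; each statement's English description precedes it below -/
import Mathlib

section
/- Suppose F is a field, and m and d are positive integers such that the multinomial coefficient (md)!/(d!)^m is nonzero as an element of F (i.e., its image under the natural ring homomorphism from the integers to F is nonzero). Let X_1, ..., X_m and T_1, ..., T_m be finite subsets of F such that |X_i - X_j| ≤ 2d for all i < j, and |T_i| ≥ (m-1)d + 1 for all i. Then there exists a system of representatives t_i ∈ T_i such that the translated sets X_1 + t_1, ..., X_m + t_m are pairwise disjoint. -/
open Pointwise

namespace PackAux

open MvPolynomial Finset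

variable {σ : Type*} {F : Type*} [Field F]

/-- `H` is the top part of `P` at level `N` for the weight `w`. -/
def Top (w : (σ →₀ ℕ) →+ ℕ) (N : ℕ) (P H : MvPolynomial σ F) : Prop :=
  (∀ e, N ≤ w e → coeff e P = coeff e H) ∧ ∀ e, N < w e → coeff e H = 0

lemma Top.mul {w : (σ →₀ ℕ) →+ ℕ} {N N' : ℕ} {P H P' H' : MvPolynomial σ F}
    (h : Top w N P H) (h' : Top w N' P' H') : Top w (N + N') (P * P') (H * H') := by
  classical
  constructor
  · intro e he
    rw [coeff_mul, coeff_mul]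
    refine Finset.sum_congr rfl fun x hx => ?_
    rw [HasAntidiagonal.mem_antidiagonal] at hx
    have hw : w x.1 + w x.2 = w e := by rw [← hx, map_add]
    by_cases h1 : N ≤ w x.1
    · by_cases h2 : N' ≤ w x.2
      · rw [h.1 _ h1, h'.1 _ h2]
      · rw [h.1 _ h1, h.2 x.1 (by omega)]; simp
    · rw [h'.1 x.2 (by omega), h'.2 x.2 (by omega)]; simp
  · intro e he
    rw [coeff_mul]
    refine Finset.sum_eq_zero fun x hx => ?_
    rw [HasAntidiagonal.mem_antidiagonal] at hx
    have hw : w x.1 + w x.2 = w e := by rw [← hx, map_add]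
    by_cases h1 : N < w x.1
    · rw [h.2 _ h1]; simp
    · rw [h'.2 x.2 (by omega)]; simp

lemma Top.C (w : (σ →₀ ℕ) →+ ℕ) (c : F) : Top w 0 (C c : MvPolynomial σ F) (MvPolynomial.C c) := by
  classical
  refine ⟨fun _ _ => rfl, fun e he => ?_⟩
  rw [coeff_C, if_neg]
  rintro rfl
  simp at he

lemma Top.one (w : (σ →₀ ℕ) →+ ℕ) : Top w 0 (1 : MvPolynomial σ F) 1 := by
  simpa using Top.C w (1 : F)

lemma Top.prod {ι : Type*} {w : (σ →₀ ℕ) →+ ℕ} (s : Finset ι) (N : ι → ℕ)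
    (P H : ι → MvPolynomial σ F) (h : ∀ i ∈ s, Top w (N i) (P i) (H i)) :
    Top w (∑ i ∈ s, N i) (∏ i ∈ s, P i) (∏ i ∈ s, H i) := by
  classical
  induction s using Finset.induction_on with
  | empty => simpa using Top.one w
  | insert a s ha ih =>
    rw [sum_insert ha, prod_insert ha, prod_insert ha]
    exact (h a (mem_insert_self _ _)).mul (ih fun i hi => h i (mem_insert_of_mem hi))

lemma Top.pow {w : (σ →₀ ℕ) →+ ℕ} {N : ℕ} {P H : MvPolynomial σ F}
    (h : Top w N P H) (n : ℕ) : Top w (n * N) (P ^ n) (H ^ n) := by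
  simpa using Top.prod (range n) (fun _ => N) (fun _ => P) (fun _ => H) (fun _ _ => h)

/-- exponent -/
noncomputable def ex [DecidableEq σ] (s : Finset σ) (a : σ → ℕ) : σ →₀ ℕ :=
  ∑ j ∈ s, Finsupp.single j (∑ i ∈ s.erase j, a i)

lemma ex_apply [DecidableEq σ] (s : Finset σ) (a : σ → ℕ) (x : σ) :
    ex s a x = if x ∈ s then ∑ i ∈ s.erase x, a i else 0 := by
  simp [ex, Finsupp.finsetSum_apply, Finsupp.single_apply]

/-- Dyson polynomial -/
noncomputable def Q (F : Type*) [Field F] [DecidableEq σ] (s : Finset σ) (a : σ → ℕ) :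
    MvPolynomial σ F :=
  ∏ i ∈ s, ∏ j ∈ s.erase i, (X j - X i) ^ a i

lemma Q_add [DecidableEq σ] (s : Finset σ) (b : σ → ℕ) (i : σ) (hi : i ∈ s) :
    Q F s (b + Pi.single i 1) = Q F s b * ∏ j ∈ s.erase i, (X j - X i) := by
  have : ∏ j ∈ s.erase i, (X j - X i : MvPolynomial σ F) =
      ∏ k ∈ s, ∏ j ∈ s.erase k, (X j - X k) ^ ((Pi.single i 1 : σ → ℕ) k) := by
    rw [← mul_prod_erase s (fun k => ∏ j ∈ s.erase k,
      (X j - X k : MvPolynomial σ F) ^ ((Pi.single i 1 : σ → ℕ) k)) hi]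
    rw [Finset.prod_eq_one (s := s.erase i) (f := fun k => ∏ j ∈ s.erase k,
      (X j - X k : MvPolynomial σ F) ^ ((Pi.single i 1 : σ → ℕ) k))]
    · simp
    · intro k hk
      have := ne_of_mem_erase hk
      simp [this]
  rw [this, Q, Q, ← prod_mul_distrib]
  refine prod_congr rfl fun k _ => ?_
  rw [← prod_mul_distrib]
  refine prod_congr rfl fun j _ => ?_
  rw [← pow_add]; rfl

lemma ex_add [DecidableEq σ] (s : Finset σ) (b : σ → ℕ) (i : σ) (hi : i ∈ s) :
    ex s (b + Pi.single i 1) = ex s b + ∑ j ∈ s.erase i, Finsupp.single j 1 := by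
  ext x
  rw [Finsupp.add_apply, ex_apply, ex_apply]
  simp only [Finsupp.finsetSum_apply, Finsupp.single_apply, Pi.add_apply, sum_add_distrib]
  by_cases hx : x ∈ s
  · by_cases hxi : x = i
    · subst hxi
      simp [hx, Pi.single_apply]
    · simp [hx, Pi.single_apply, hxi, hi, Ne.symm hxi]
  · simp [hx]

lemma coeff_shift [DecidableEq σ] (u : Finset σ) (e : σ →₀ ℕ) (P : MvPolynomial σ F) :
    coeff (e + ∑ j ∈ u, Finsupp.single j 1) (P * ∏ j ∈ u, X j) = coeff e P := by
  have : (∏ j ∈ u, X j : MvPolynomial σ F) = monomial (∑ j ∈ u, Finsupp.single j 1) 1 := by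
    rw [monomial_sum_one]; rfl
  rw [this, coeff_mul_monomial, mul_one]

lemma lagr {K : Type*} [Field K] [DecidableEq σ] (s : Finset σ) (hs : s.Nonempty) (v : σ → K)
    (hv : Function.Injective v) :
    ∑ i ∈ s, ∏ j ∈ s.erase i, (v j / (v j - v i)) = 1 := by
  have h := congrArg (Polynomial.eval 0) (Lagrange.sum_basis (s := s) (v := v) hv.injOn hs)
  rw [Polynomial.eval_finsetSum] at h
  simp only [Lagrange.basis, Polynomial.eval_prod, Lagrange.basisDivisor, Polynomial.eval_mul,
    Polynomial.eval_C, Polynomial.eval_sub, Polynomial.eval_X, Polynomial.eval_one, zero_sub] at h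
  rw [← h]
  refine sum_congr rfl fun i _ => prod_congr rfl fun j _ => ?_
  rw [← neg_sub (v j) (v i), inv_neg, neg_mul_neg, div_eq_inv_mul]

lemma Q_rec [DecidableEq σ] (s : Finset σ) (hs : s.Nonempty) (a : σ → ℕ)
    (b : σ → σ → ℕ) (hb : ∀ i ∈ s, b i + Pi.single i 1 = a) :
    Q F s a = ∑ i ∈ s, Q F s (b i) * ∏ j ∈ s.erase i, X j := by
  let K := FractionRing (MvPolynomial σ F)
  have hinj : Function.Injective (algebraMap (MvPolynomial σ F) K) := IsFractionRing.injective _ _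
  apply hinj
  let v : σ → K := fun i => algebraMap (MvPolynomial σ F) K (X i)
  have hv : Function.Injective v := fun i j h => X_injective (hinj h)
  rw [← mul_one (algebraMap _ K (Q F s a)), ← lagr s hs v hv, mul_sum, map_sum]
  refine sum_congr rfl fun i hi => ?_
  rw [← hb i hi, Q_add s _ i hi, prod_div_distrib, map_mul, map_mul, map_prod, map_prod]
  have : ∏ j ∈ s.erase i, (v j - v i) ≠ 0 := by
    rw [prod_ne_zero_iff]
    intro j hj
    exact sub_ne_zero.2 fun h => ne_of_mem_erase hj (hv h)
  simp only [map_sub]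
  change _ * (∏ j ∈ s.erase i, (v j - v i)) * (_ / _) = _ * ∏ j ∈ s.erase i, v j
  rw [mul_assoc, mul_div_cancel₀ _ this]

lemma mult_add [DecidableEq σ] (s : Finset σ) (b : σ → ℕ) (i : σ) (hi : i ∈ s) :
    Nat.multinomial s (b + Pi.single i 1) * (b i + 1) =
      Nat.multinomial s b * (∑ j ∈ s, b j + 1) := by
  have h1 := Nat.multinomial_spec s b
  have h2 := Nat.multinomial_spec s (b + Pi.single i 1)
  have h3 : ∑ j ∈ s, (b + Pi.single i 1 : σ → ℕ) j = ∑ j ∈ s, b j + 1 := by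
    simp [sum_add_distrib, Pi.single_apply, hi]
  have h4 : ∏ j ∈ s, ((b + Pi.single i 1 : σ → ℕ) j).factorial = (b i + 1) * ∏ j ∈ s, (b j).factorial := by
    rw [← mul_prod_erase s _ hi, ← mul_prod_erase s (fun j => (b j).factorial) hi, ← mul_assoc]
    congr 1
    · simp [Nat.factorial_succ]
    · refine prod_congr rfl fun j hj => ?_
      simp [ne_of_mem_erase hj]
  rw [h3, h4, Nat.factorial_succ, ← h1] at h2
  have : 0 < ∏ j ∈ s, (b j).factorial := Finset.prod_pos fun _ _ => Nat.factorial_pos _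
  apply Nat.eq_of_mul_eq_mul_left this
  linarith

lemma mult_rec [DecidableEq σ] (s : Finset σ) (hs : s.Nonempty) (a : σ → ℕ)
    (b : σ → σ → ℕ) (hb : ∀ i ∈ s, b i + Pi.single i 1 = a) :
    ∑ i ∈ s, Nat.multinomial s (b i) = Nat.multinomial s a := by
  have key : ∀ i ∈ s, Nat.multinomial s (b i) * ∑ j ∈ s, a j = Nat.multinomial s a * a i := by
    intro i hi
    have h := mult_add s (b i) i hi
    have h3 : ∑ j ∈ s, (b i + Pi.single i 1 : σ → ℕ) j = ∑ j ∈ s, b i j + 1 := by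
      simp [sum_add_distrib, Pi.single_apply, hi]
    have h4 : (b i + Pi.single i 1 : σ → ℕ) i = b i i + 1 := by simp
    rw [← h3, ← h4, hb i hi] at h
    exact h.symm
  have hpos : 0 < ∑ j ∈ s, a j := by
    obtain ⟨i, hi⟩ := hs
    refine lt_of_lt_of_le ?_ (single_le_sum (f := a) (fun _ _ => Nat.zero_le _) hi)
    rw [← hb i hi]; simp
  apply Nat.eq_of_mul_eq_mul_right hpos
  rw [sum_mul, sum_congr rfl key, ← mul_sum]

lemma top_k_sub [DecidableEq σ] (k i : σ) (h : i ≠ k) :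
    Top (Finsupp.applyAddHom k) 1 (X k - X i : MvPolynomial σ F) (X k) := by
  constructor
  · intro e he
    rw [coeff_sub, coeff_X i, if_neg, sub_zero]
    rintro rfl
    simp [h] at he
  · intro e he
    rw [coeff_X, if_neg]
    rintro rfl
    simp at he

lemma top_k_free [DecidableEq σ] (k i j : σ) (h : i ≠ k) (h' : j ≠ k) :
    Top (Finsupp.applyAddHom k) 0 (X j - X i : MvPolynomial σ F) (X j - X i) := by
  refine ⟨fun _ _ => rfl, fun e he => ?_⟩
  rw [coeff_sub, coeff_X, coeff_X, if_neg, if_neg, sub_zero]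
  · rintro rfl
    simp [h] at he
  · rintro rfl
    simp [h'] at he

lemma Q_zero [DecidableEq σ] (s : Finset σ) (a : σ → ℕ) (k : σ) (hk : k ∈ s) (ha : a k = 0) :
    coeff (ex s a) (Q F s a) = coeff (ex (s.erase k) a) (Q F (s.erase k) a) := by
  have hQ : Q F s a = (∏ i ∈ s.erase k, (X k - X i) ^ a i) * Q F (s.erase k) a := by
    rw [Q, ← mul_prod_erase s (fun i => ∏ j ∈ s.erase i, (X j - X i : MvPolynomial σ F) ^ a i) hk, Q]
    simp only [ha, pow_zero, prod_const_one, one_mul]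
    rw [← prod_mul_distrib]
    refine prod_congr rfl fun i hi => ?_
    rw [erase_right_comm]
    rw [mul_prod_erase (s.erase i) (fun j => (X j - X i : MvPolynomial σ F) ^ a i)]
    exact mem_erase.2 ⟨(ne_of_mem_erase hi).symm, hk⟩
  have hex : ex s a = Finsupp.single k (∑ i ∈ s.erase k, a i) + ex (s.erase k) a := by
    ext x
    rw [Finsupp.add_apply, ex_apply, ex_apply, Finsupp.single_apply]
    by_cases hxk : k = x
    · subst hxk; simp [hk]
    · by_cases hx : x ∈ s
      · simp only [hx, hxk, if_true, if_false, mem_erase, ne_eq, Ne.symm hxk, not_false_eq_true,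
          and_self, zero_add]
        rw [erase_right_comm, ← add_sum_erase (s.erase x) a (mem_erase.2 ⟨hxk, hk⟩), ha, zero_add]
      · simp [hx, hxk]
  have ht1 := Top.prod (w := Finsupp.applyAddHom k) (s.erase k) (fun i => a i * 1)
    (fun i => (X k - X i : MvPolynomial σ F) ^ a i) (fun i => X k ^ a i)
    (fun i hi => (top_k_sub k i (ne_of_mem_erase hi)).pow _)
  have ht2 : Top (Finsupp.applyAddHom k) 0 (Q F (s.erase k) a) (Q F (s.erase k) a) := by
    have := Top.prod (F := F) (w := Finsupp.applyAddHom k) (s.erase k) (fun i => 0)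
      (fun i => ∏ j ∈ (s.erase k).erase i, (X j - X i) ^ a i)
      (fun i => ∏ j ∈ (s.erase k).erase i, (X j - X i) ^ a i) (fun i hi => by
        have := Top.prod (F := F) (w := Finsupp.applyAddHom k) ((s.erase k).erase i)
          (fun j => a i * 0)
          (fun j => (X j - X i) ^ a i) (fun j => (X j - X i) ^ a i) (fun j hj =>
            (top_k_free k i j (ne_of_mem_erase hi) (ne_of_mem_erase (mem_of_mem_erase hj))).pow _)
        simpa using this)
    simpa [Q] using this
  have := (ht1.mul ht2).1 (ex s a) (by simp [ex_apply, hk])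
  rw [hQ, this, prod_pow_eq_pow_sum, hex, X_pow_eq_monomial, coeff_monomial_mul, one_mul]

theorem dyson [DecidableEq σ] (n : ℕ) : ∀ (s : Finset σ) (a : σ → ℕ), s.card + ∑ i ∈ s, a i = n →
    coeff (ex s a) (Q F s a) = (Nat.multinomial s a : F) := by
  induction n using Nat.strong_induction_on with
  | _ n ih =>
  intro s a hn
  rcases s.eq_empty_or_nonempty with rfl | hs
  · simp [ex, Q]
  by_cases h0 : ∃ k ∈ s, a k = 0
  · obtain ⟨k, hk, ha⟩ := h0
    have h1 := card_erase_add_one hk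
    have h2 := add_sum_erase s a hk
    rw [Q_zero s a k hk ha, ih _ _ (s.erase k) a rfl]
    · congr 1
      apply Nat.multinomial_congr_of_sdiff (erase_subset _ _)
      · intro x hx
        have : x = k := by simp at hx; tauto
        rw [this, ha]
      · intros; rfl
    · omega
  · push Not at h0
    let b : σ → σ → ℕ := fun i => a - Pi.single i 1
    have hb : ∀ i ∈ s, b i + Pi.single i 1 = a := by
      intro i hi
      ext x
      by_cases hx : x = i
      · subst hx
        have := h0 x hi
        simp [b]; omega
      · simp [b, hx]
    rw [Q_rec s hs a b hb, coeff_sum, ← mult_rec s hs a b hb, Nat.cast_sum]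
    refine sum_congr rfl fun i hi => ?_
    have h3 : ∑ j ∈ s, (b i + Pi.single i 1 : σ → ℕ) j = ∑ j ∈ s, b i j + 1 := by
      simp [sum_add_distrib, Pi.single_apply, hi]
    rw [hb i hi] at h3
    rw [← hb i hi, ex_add s _ i hi, coeff_shift]
    exact ih _ (by omega) s (b i) rfl

lemma top_deg [DecidableEq σ] (i j : σ) (c : F) :
    Top Finsupp.degree 1 (X i - X j - C c : MvPolynomial σ F) (X i - X j) := by
  constructor
  · intro e he
    rw [coeff_sub _ e _ (MvPolynomial.C c), coeff_C, if_neg, sub_zero]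
    rintro rfl
    simp at he
  · intro e he
    rw [coeff_sub, coeff_X, coeff_X, if_neg, if_neg, sub_zero]
    · rintro rfl
      simp at he
    · rintro rfl
      simp at he

end PackAux

open PackAux in
/-- Packing translates in a field. -/
theorem packing_translates_field (F : Type*) [Field F] [DecidableEq F]
    (m d : ℕ) (hm : 0 < m) (hd : 0 < d)
    (hchar : (((m * d).factorial / d.factorial ^ m : ℕ) : F) ≠ 0)
    (X T : Fin m → Finset F)
    (hX : ∀ i j : Fin m, i < j → (X i - X j).card ≤ 2 * d)
    (hT : ∀ i, (m - 1) * d + 1 ≤ (T i).card) :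
    ∃ t : Fin m → F, (∀ i, t i ∈ T i) ∧
      ∀ i j, i ≠ j →
        Disjoint ((X i).image (fun x => x + t i))
          ((X j).image (fun x => x + t j)) := by
  classical
  -- factor of the pair (i, j)
  let x : Fin m → MvPolynomial (Fin m) F := MvPolynomial.X
  let g : Fin m → Fin m → MvPolynomial (Fin m) F := fun i j =>
    MvPolynomial.C ((-1) ^ d) * ((∏ c ∈ X i - X j, (x j - x i - MvPolynomial.C c)) *
      (x j - x i - MvPolynomial.C 0) ^ (2 * d - (X i - X j).card))
  have hg : ∀ i j, i < j →
      Top Finsupp.degree (2 * d) (g i j) ((x j - x i) ^ d * (x i - x j) ^ d) := by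
    intro i j hij
    have h1 := Top.prod (w := Finsupp.degree) (X i - X j) (fun _ => 1)
      (fun c => x j - x i - MvPolynomial.C c) (fun _ => x j - x i) (fun c _ => top_deg j i c)
    have h2 := (top_deg j i (0 : F)).pow (2 * d - (X i - X j).card)
    have h3 := (Top.C Finsupp.degree ((-1 : F) ^ d)).mul (h1.mul h2)
    have hc := hX i j hij
    convert h3 using 1
    · simp; omega
    · rw [Finset.prod_const, ← pow_add, Nat.add_sub_cancel' hc, ← neg_sub (x j) (x i), neg_pow,
        two_mul, pow_add]
      simp only [map_pow, map_neg, map_one]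
      ring
  let P := ∏ i, ∏ j ∈ Finset.Ioi i, g i j
  have hP := Top.prod (w := Finsupp.degree) Finset.univ _ _ _ (fun i (_ : i ∈ Finset.univ) =>
    Top.prod (w := Finsupp.degree) (Finset.Ioi i) _ _ _
      (fun j hj => hg i j (Finset.mem_Ioi.1 hj)))
  rw [Finset.prod_prod_Ioi_mul_eq_prod_prod_off_diag (fun j i => (x j - x i) ^ d)] at hP
  have hQ : (∏ i, ∏ j ∈ ({i} : Finset (Fin m))ᶜ, (x j - x i) ^ d) =
      Q F Finset.univ (fun _ => d) := by
    unfold Q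
    simp only [Finset.compl_singleton]
    rfl
  rw [hQ] at hP
  set N := ∑ i : Fin m, ∑ j ∈ Finset.Ioi i, 2 * d with hN
  have hexa : ∀ i, ex Finset.univ (fun _ : Fin m => d) i = (m - 1) * d := by
    intro i; rw [ex_apply]; simp
  have hdeg : (ex Finset.univ (fun _ : Fin m => d)).degree = N := by
    rw [Finsupp.degree_eq_sum]
    simp only [hexa]
    have h := Finset.sum_sum_Ioi_add_eq_sum_sum_off_diag (fun _ _ : Fin m => d)
    simp only [← two_mul] at h
    rw [hN, h]
    refine Finset.sum_congr rfl fun i _ => ?_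
    simp [Finset.card_compl]
  have hco : MvPolynomial.coeff (ex Finset.univ (fun _ : Fin m => d)) P ≠ 0 := by
    rw [hP.1 _ hdeg.ge, dyson _ _ _ rfl]
    simpa [Nat.multinomial] using hchar
  have htd : P.totalDegree = (ex Finset.univ (fun _ : Fin m => d)).degree := by
    apply le_antisymm
    · rw [MvPolynomial.totalDegree]
      refine Finset.sup_le fun e he => ?_
      by_contra hlt
      rw [MvPolynomial.mem_support_iff] at he
      have hlt' : N < e.degree := by
        rw [hdeg] at hlt
        exact not_le.1 hlt
      exact he ((hP.1 e hlt'.le).trans (hP.2 e hlt'))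
    · exact MvPolynomial.le_totalDegree (MvPolynomial.mem_support_iff.2 hco)
  obtain ⟨t, ht, hne⟩ := MvPolynomial.combinatorial_nullstellensatz_exists_eval_nonzero P _ hco htd
    T (fun i => by rw [hexa]; have := hT i; omega)
  refine ⟨t, ht, ?_⟩
  have hlt : ∀ i j, i < j → Disjoint ((X i).image (fun x => x + t i))
      ((X j).image (fun x => x + t j)) := by
    intro i j hij
    rw [Finset.disjoint_left]
    intro z hz hz'
    obtain ⟨p, hp, rfl⟩ := Finset.mem_image.1 hz
    obtain ⟨q, hq, hpq⟩ := Finset.mem_image.1 hz'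
    apply hne
    rw [map_prod]
    refine Finset.prod_eq_zero (Finset.mem_univ i) ?_
    rw [map_prod]
    refine Finset.prod_eq_zero (Finset.mem_Ioi.2 hij) ?_
    simp only [g, map_mul, map_prod]
    rw [Finset.prod_eq_zero (Finset.sub_mem_sub hp hq)]
    · simp
    · simp only [x, map_sub, MvPolynomial.eval_X, MvPolynomial.eval_C]
      linear_combination hpq
  intro i j hij
  rcases lt_or_gt_of_ne hij with h | h
  · exact hlt i j h
  · exact (hlt j i h).symm
end

section
/- Let p be a prime, and let m and d be positive integers with md < p. Let X_1, ..., X_m be subsets of F_p such that |X_i - X_j| ≤ 2d for all i < j. Then there exist elements t_1, ..., t_m ∈ F_p such that the translated sets X_1 + t_1, ..., X_m + t_m are pairwise disjoint. -/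
open Pointwise

open MvPolynomial in
lemma pk_deg {σ ι : Type*} {R : Type*} [CommRing R] (s : Finset ι)
    (l : ι → MvPolynomial σ R) (hl : ∀ k, (l k).totalDegree ≤ 1) (c : ι → R) :
    (∏ k ∈ s, (l k - C (c k))).totalDegree ≤ s.card := by
  refine (totalDegree_finsetProd _ _).trans ?_
  rw [Finset.card_eq_sum_ones]
  exact Finset.sum_le_sum fun k _ => (totalDegree_sub_C_le _ _).trans (hl k)

open MvPolynomial in
lemma pk_diff {σ ι : Type*} {R : Type*} [CommRing R] (s : Finset ι)
    (l : ι → MvPolynomial σ R) (hl : ∀ k, (l k).totalDegree ≤ 1) (c : ι → R) :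
    (∏ k ∈ s, (l k - C (c k))) - ∏ k ∈ s, l k = 0 ∨
    ((∏ k ∈ s, (l k - C (c k))) - ∏ k ∈ s, l k).totalDegree < s.card := by
  classical
  induction s using Finset.induction_on with
  | empty => left; simp
  | insert a s ha ih =>
    right
    rw [Finset.prod_insert ha, Finset.prod_insert ha, Finset.card_insert_of_notMem ha]
    have e : (l a - C (c a)) * (∏ k ∈ s, (l k - C (c k))) - l a * ∏ k ∈ s, l k
      = l a * ((∏ k ∈ s, (l k - C (c k))) - ∏ k ∈ s, l k)
        - C (c a) * ∏ k ∈ s, (l k - C (c k)) := by ring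
    rw [e, Nat.lt_succ_iff]
    refine (totalDegree_sub _ _).trans (max_le ?_ ?_)
    · rcases ih with h | h
      · rw [h]; simp
      · refine (totalDegree_mul _ _).trans ?_
        have := hl a
        omega
    · refine (totalDegree_mul _ _).trans ?_
      rw [totalDegree_C, zero_add]
      exact pk_deg s l hl c

open MvPolynomial in
lemma pk_coeff {σ ι : Type*} {R : Type*} [CommRing R] (s : Finset ι)
    (l : ι → MvPolynomial σ R) (hl : ∀ k, (l k).totalDegree ≤ 1) (c : ι → R)
    (t : σ →₀ ℕ) (ht : t.degree = s.card) :
    coeff t (∏ k ∈ s, (l k - C (c k))) = coeff t (∏ k ∈ s, l k) := by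
  rw [← sub_eq_zero, ← coeff_sub]
  rcases pk_diff s l hl c with h | h
  · rw [h]; simp
  · apply coeff_eq_zero_of_totalDegree_lt
    rw [← ht] at h
    exact h

/-- The integer packing is unique. -/
lemma pk_unique (m d : ℕ) (hd : 0 < d) (v : Fin m → ℕ) (hv : ∀ i, v i ≤ d * (m - 1))
    (h : ∀ i j, i < j → v j + d ≤ v i ∨ v i + d + 1 ≤ v j) (i : Fin m) :
    v i = d * (m - 1 - i) := by
  have hm : 0 < m := i.pos
  have h' : ∀ i j, i ≠ j → v j + d ≤ v i ∨ v i + d ≤ v j := by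
    intro i j hij
    rcases lt_or_gt_of_ne hij with h1 | h1
    · have := h i j h1; omega
    · have := h j i h1; omega
  have hlt : ∀ i, v i / d < m := by
    intro i
    have : v i / d ≤ m - 1 := Nat.div_le_of_le_mul (hv i)
    omega
  let w : Fin m → Fin m := fun i => ⟨v i / d, hlt i⟩
  have hw : Function.Injective w := by
    intro a b hab
    by_contra hne
    have e : v a / d = v b / d := by simpa [w] using hab
    have h1 := Nat.div_add_mod (v a) d
    have h2 := Nat.div_add_mod (v b) d
    have h3 := Nat.mod_lt (v a) hd
    have h4 := Nat.mod_lt (v b) hd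
    rw [e] at h1
    have := h' a b hne
    omega
  have hb : Function.Bijective w := Finite.injective_iff_bijective.mp hw
  let e := Equiv.ofBijective w hb
  have he : ∀ k : Fin m, v (e.symm k) / d = k := by
    intro k
    have : w (e.symm k) = k := e.apply_symm_apply k
    exact congrArg Fin.val this
  have hstep : ∀ a b : Fin m, (a : ℕ) + 1 = b → v (e.symm a) + d ≤ v (e.symm b) ∧
      (e.symm a < e.symm b → v (e.symm a) + d + 1 ≤ v (e.symm b)) := by
    intro a b hab
    have hne : e.symm a ≠ e.symm b := by
      intro hh
      have := e.symm.injective hh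
      rw [this] at hab; omega
    have hlt : v (e.symm a) < v (e.symm b) := by
      by_contra hcon
      have := Nat.div_le_div_right (c := d) (not_lt.mp hcon)
      rw [he, he] at this
      omega
    constructor
    · have := h' _ _ hne; omega
    · intro hl
      have := h _ _ hl; omega
  have hval : ∀ n : ℕ, ∀ k : Fin m, (k : ℕ) + n = m - 1 → v (e.symm k) ≤ d * k := by
    intro n
    induction n with
    | zero =>
      intro k hk
      have := hv (e.symm k)
      rw [← hk] at this
      simpa using this
    | succ n ih =>
      intro k hk
      have h1 := ih ⟨k + 1, by omega⟩ (by simp; omega)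
      have h2 := (hstep k ⟨k + 1, by omega⟩ rfl).1
      simp only [mul_add] at h1
      omega
  have hval2 : ∀ k : Fin m, v (e.symm k) = d * k := by
    intro k
    apply le_antisymm (hval (m - 1 - k) k (by omega))
    have := Nat.mul_div_le (v (e.symm k)) d
    rwa [he] at this
  have hanti : ∀ n : ℕ, ∀ k : Fin m, (k : ℕ) = n → n + (e.symm k : ℕ) ≤ m - 1 := by
    intro n
    induction n with
    | zero => intro k hk; omega
    | succ n ih =>
      intro k hk
      have h0 := ih ⟨n, by omega⟩ rfl
      have h2 := (hstep ⟨n, by omega⟩ k hk.symm).2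
      rw [hval2, hval2] at h2
      have h3 : ¬ (e.symm ⟨n, by omega⟩ < e.symm k) := by
        intro hc
        have := h2 hc
        simp only [hk, mul_add] at this
        omega
      have h4 : e.symm k ≠ e.symm ⟨n, by omega⟩ := by
        intro hh
        have := congrArg Fin.val (e.symm.injective hh)
        simp at this
        omega
      have h5 : e.symm k < e.symm ⟨n, by omega⟩ := lt_of_le_of_ne (not_lt.mp h3) h4
      have h6 : (e.symm k : ℕ) < (e.symm ⟨n, by omega⟩ : ℕ) := h5
      omega
  have hanti2 : ∀ n : ℕ, ∀ k : Fin m, (k : ℕ) + n = m - 1 → n ≤ (e.symm k : ℕ) := by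
    intro n
    induction n with
    | zero => intro k hk; omega
    | succ n ih =>
      intro k hk
      have h0 := ih ⟨k + 1, by omega⟩ (by simp; omega)
      have h2 := (hstep k ⟨k + 1, by omega⟩ rfl).2
      rw [hval2, hval2] at h2
      have h3 : ¬ (e.symm k < e.symm ⟨k + 1, by omega⟩) := by
        intro hc
        have := h2 hc
        simp only [mul_add] at this
        omega
      have h4 : e.symm k ≠ e.symm ⟨k + 1, by omega⟩ := by
        intro hh
        have := congrArg Fin.val (e.symm.injective hh)
        simp at this
      have h5 : e.symm ⟨k + 1, by omega⟩ < e.symm k :=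
        lt_of_le_of_ne (not_lt.mp h3) (Ne.symm h4)
      have h6 : (e.symm ⟨k + 1, by omega⟩ : ℕ) < (e.symm k : ℕ) := h5
      omega
  have a1 := hanti _ (e i) rfl
  have a2 := hanti2 (m - 1 - (e i : ℕ)) (e i) (by have := (e i).2; omega)
  have a3 := hval2 (e i)
  rw [Equiv.symm_apply_apply] at a1 a2 a3
  rw [a3]
  congr 1
  omega

lemma pk_enum {α : Type*} [Inhabited α] (s : Finset α) (n : ℕ) (h : s.card ≤ n) :
    ∃ e : ℕ → α, ∀ x ∈ s, ∃ k < n, e k = x := by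
  refine ⟨fun k => s.toList.getD k default, fun x hx => ?_⟩
  obtain ⟨k, hk, rfl⟩ := List.getElem_of_mem (Finset.mem_toList.mpr hx)
  refine ⟨k, ?_, ?_⟩
  · rw [Finset.length_toList] at hk; omega
  · exact List.getD_eq_getElem _ _ hk

open MvPolynomial in
/-- For any choice of constants, some point avoids all the hyperplanes. -/
lemma pk_main (p : ℕ) [Fact p.Prime] (m d : ℕ) (hd : 0 < d) (hmd : m * d < p)
    (c : (Fin m × Fin m) × Fin d → ZMod p) :
    ∃ x : Fin m → ZMod p, ∀ i j, i ≠ j → ∀ s, x i - x j ≠ c ((i, j), s) := by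
  classical
  by_contra! hcon
  have hp0 : 0 < p := by omega
  rcases Nat.eq_zero_or_pos m with rfl | hm
  · obtain ⟨i, _⟩ := hcon 0
    exact i.elim0
  set N := d * (m - 1) with hN
  have hNd : N + d = m * d := by
    obtain ⟨k, rfl⟩ : ∃ k, m = k + 1 := ⟨m - 1, by omega⟩
    simp [hN]; ring
  have hcast : ∀ a b : ℕ, a < p → b < p → (a : ZMod p) = b → a = b := by
    intro a b ha hb hab
    rw [ZMod.natCast_eq_natCast_iff'] at hab
    rwa [Nat.mod_eq_of_lt ha, Nat.mod_eq_of_lt hb] at hab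
  let A : Finset (ZMod p) := (Finset.range (N + 1)).image (fun n : ℕ => (n : ZMod p))
  have hA : A.card = N + 1 := by
    rw [Finset.card_image_of_injOn, Finset.card_range]
    intro a ha b hb hab
    simp at ha hb
    exact hcast a b (by omega) (by omega) hab
  let al : Fin m → ZMod p := fun i => ((d * (m - 1 - i) : ℕ) : ZMod p)
  have hal : ∀ i, al i ∈ A := by
    intro i
    refine Finset.mem_image.mpr ⟨d * (m - 1 - i), ?_, rfl⟩
    have : d * (m - 1 - i) ≤ N := Nat.mul_le_mul_left d (by omega)
    simp; omega
  let I : Finset ((Fin m × Fin m) × Fin d) := (Finset.univ : Finset (Fin m)).offDiag ×ˢ Finset.univ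
  have hI : I.card = m * N := by
    simp only [I, Finset.card_product, Finset.offDiag_card, Finset.card_univ, Fintype.card_fin]
    rw [hN, Nat.mul_sub_one m m |>.symm]
    ring
  let l : (Fin m × Fin m) × Fin d → MvPolynomial (Fin m) (ZMod p) :=
    fun k => X k.1.1 - X k.1.2
  have hl : ∀ k, (l k).totalDegree ≤ 1 := fun k =>
    (totalDegree_sub _ _).trans (by simp)
  let g : (Fin m × Fin m) × Fin d → ZMod p :=
    fun k => if k.1.1 < k.1.2 then ((k.2 : ℕ) : ZMod p) else ((k.2 + 1 : ℕ) : ZMod p)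
  let P := ∏ k ∈ I, (l k - C (c k))
  let G := ∏ k ∈ I, (l k - C (g k))
  let J : Finset (Σ _ : Fin m, ZMod p) := Finset.univ.sigma (fun i => A.erase (al i))
  have hJ : J.card = m * N := by
    simp only [J, Finset.card_sigma, Finset.card_erase_of_mem (hal _), hA]
    simp
  let L : MvPolynomial (Fin m) (ZMod p) := ∏ k ∈ J, (X k.1 - C k.2)
  let t : Fin m →₀ ℕ := Finsupp.equivFunOnFinite.symm (fun _ => N)
  have ht : t.degree = m * N := by
    rw [Finsupp.degree_eq_sum]; simp [t]
  have hX1 : ∀ k : (Σ _ : Fin m, ZMod p),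
      (X k.1 : MvPolynomial (Fin m) (ZMod p)).totalDegree ≤ 1 := fun k => by simp
  have hLc : coeff t L = 1 := by
    simp only [L]
    rw [pk_coeff J (fun k => X k.1) hX1 (fun k => k.2) t (by rw [ht, hJ])]
    have : ∏ k ∈ J, (X k.1 : MvPolynomial (Fin m) (ZMod p)) = monomial t 1 := by
      simp only [J, Finset.prod_sigma, Finset.prod_const, Finset.card_erase_of_mem (hal _), hA]
      rw [monomial_eq, Finsupp.prod_fintype _ _ (by simp)]
      simp [t]
    rw [this, coeff_monomial, if_pos rfl]
  have hPG : coeff t P = coeff t G := by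
    simp only [P, G]
    rw [pk_coeff I l hl c t (by rw [ht, hI]), pk_coeff I l hl g t (by rw [ht, hI])]
  have evI : ∀ (x : Fin m → ZMod p) (b : (Fin m × Fin m) × Fin d → ZMod p),
      eval x (∏ k ∈ I, (l k - C (b k))) = ∏ k ∈ I, (x k.1.1 - x k.1.2 - b k) := by
    intro x b
    simp [l, eval_prod]
  have evL : ∀ x : Fin m → ZMod p, eval x L = ∏ k ∈ J, (x k.1 - k.2) := by
    intro x
    simp [L, eval_prod]
  have hP0 : ∀ x, eval x P = 0 := by
    intro x
    obtain ⟨i, j, hij, s, hs⟩ := hcon x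
    simp only [P]
    rw [evI]
    exact Finset.prod_eq_zero (i := ((i, j), s)) (by simp [I, hij]) (by simp [hs])
  have hL0 : ∀ x, (∀ i, x i ∈ A) → x ≠ al → eval x L = 0 := by
    intro x hx hne
    obtain ⟨i, hi⟩ := Function.ne_iff.mp hne
    rw [evL]
    exact Finset.prod_eq_zero (i := ⟨i, x i⟩) (by simp [J, hi, hx]) (by simp)
  have hLal : eval al L ≠ 0 := by
    rw [evL, Finset.prod_ne_zero_iff]
    rintro ⟨i, a⟩ hk
    simp [J] at hk
    exact sub_ne_zero.mpr (fun h => hk.1 h.symm)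
  have hG0 : ∀ x, (∀ i, x i ∈ A) → x ≠ al → eval x G = 0 := by
    intro x hx hne
    by_contra hG
    apply hne
    simp only [G] at hG
    rw [evI, ← ne_eq, Finset.prod_ne_zero_iff] at hG
    have hx' : ∀ i, ∃ n : ℕ, n ≤ N ∧ (n : ZMod p) = x i := by
      intro i
      obtain ⟨n, hn, h⟩ := Finset.mem_image.mp (hx i)
      exact ⟨n, by simp at hn; omega, h⟩
    choose v hv hvx using hx'
    have hu := pk_unique m d hd v hv (by
      intro i j hij
      by_contra! hh
      rcases le_or_gt (v j) (v i) with h1 | h1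
      · apply hG ((i, j), ⟨v i - v j, by omega⟩) (by simp [I, hij.ne])
        simp only [g, if_pos hij, ← hvx]
        push_cast [Nat.cast_sub h1]
        ring
      · apply hG ((j, i), ⟨v j - v i - 1, by omega⟩) (by simp [I, hij.ne'])
        simp only [g, if_neg hij.not_gt, ← hvx]
        rw [show v j - v i - 1 + 1 = v j - v i by omega]
        push_cast [Nat.cast_sub h1.le]
        ring)
    funext i
    rw [← hvx, hu i]
  have hGal : eval al G ≠ 0 := by
    simp only [G]
    rw [evI, Finset.prod_ne_zero_iff]
    rintro ⟨⟨i, j⟩, s⟩ hk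
    have hij : i ≠ j := by simpa [I] using hk
    have hs := s.2
    intro h0
    simp only [g, al] at h0
    rw [sub_sub, sub_eq_zero] at h0
    rcases lt_or_gt_of_ne hij with h1 | h1
    · rw [if_pos h1, ← Nat.cast_add] at h0
      have b1 : d * (m - 1 - i) ≤ N := Nat.mul_le_mul_left d (by omega)
      have b2 : d * (m - 1 - j + 1) ≤ d * (m - 1 - i) := Nat.mul_le_mul_left d (by omega)
      rw [mul_add] at b2
      have := hcast _ _ (by omega) (by omega) h0
      omega
    · rw [if_neg h1.not_gt, ← Nat.cast_add] at h0
      have b1 : d * (m - 1 - j) ≤ N := Nat.mul_le_mul_left d (by omega)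
      have b2 : d * (m - 1 - i + 1) ≤ d * (m - 1 - j) := Nat.mul_le_mul_left d (by omega)
      rw [mul_add] at b2
      have := hcast _ _ (by omega) (by omega) h0
      omega
  let r : ZMod p := eval al G / eval al L
  have hr : r ≠ 0 := div_ne_zero hGal hLal
  let Q := P - G + C r * L
  have hQc : coeff t Q = r := by
    simp only [Q, coeff_add, coeff_sub, hPG, coeff_C_mul, hLc]
    ring
  have hQne : coeff t Q ≠ 0 := by rw [hQc]; exact hr
  have hQd : Q.totalDegree = t.degree := by
    apply le_antisymm
    · rw [ht]
      refine (totalDegree_add _ _).trans (max_le ((totalDegree_sub _ _).trans (max_le ?_ ?_)) ?_)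
      · rw [← hI]; exact pk_deg I l hl c
      · rw [← hI]; exact pk_deg I l hl g
      · refine (totalDegree_mul _ _).trans ?_
        rw [totalDegree_C, zero_add, ← hJ]
        exact pk_deg J (fun k => X k.1) hX1 (fun k => k.2)
    · have := le_totalDegree (mem_support_iff.mpr hQne)
      exact this
  obtain ⟨x, hx, hxne⟩ := combinatorial_nullstellensatz_exists_eval_nonzero Q t hQne hQd
    (fun _ => A) (by intro i; rw [hA]; simp [t])
  apply hxne
  simp only [Q, map_add, map_sub, map_mul, eval_C, hP0]
  by_cases hxa : x = al
  · subst hxa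
    simp only [r]
    field_simp
    ring
  · rw [hL0 x hx hxa, hG0 x hx hxa]; ring

/-- Packing translates in `F_p` when `m * d < p`. -/
theorem packing_translates_Fp (p : ℕ) (hp : p.Prime)
    (m d : ℕ) (hm : 0 < m) (hd : 0 < d) (hmd : m * d < p)
    (X : Fin m → Finset (ZMod p))
    (hX : ∀ i j : Fin m, i < j → (X i - X j).card ≤ 2 * d) :
    ∃ t : Fin m → ZMod p,
      ∀ i j, i ≠ j →
        Disjoint ((X i).image (fun x => x + t i))
          ((X j).image (fun x => x + t j)) := by
  haveI : Fact p.Prime := ⟨hp⟩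
  have hen : ∀ i j : Fin m, ∃ e : ℕ → ZMod p, i < j →
      ∀ x ∈ X i - X j, ∃ k < 2 * d, e k = x := by
    intro i j
    by_cases hij : i < j
    · obtain ⟨e, he⟩ := pk_enum (X i - X j) (2 * d) (hX i j hij)
      exact ⟨e, fun _ => he⟩
    · exact ⟨0, fun h => absurd h hij⟩
  choose e he using hen
  obtain ⟨t, ht⟩ := pk_main p m d hd hmd (fun k =>
    if k.1.1 < k.1.2 then - e k.1.1 k.1.2 k.2 else e k.1.2 k.1.1 (d + k.2))
  have key : ∀ i j, i < j → Disjoint ((X i).image (fun x => x + t i))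
          ((X j).image (fun x => x + t j)) := by
    intro i j hij
    rw [Finset.disjoint_left]
    intro z hz hz'
    obtain ⟨x, hx, rfl⟩ := Finset.mem_image.mp hz
    obtain ⟨y, hy, hxy⟩ := Finset.mem_image.mp hz'
    obtain ⟨k, hk, hek⟩ := he i j hij (x - y) (Finset.sub_mem_sub hx hy)
    by_cases hkd : k < d
    · apply ht i j hij.ne ⟨k, hkd⟩
      simp only [if_pos hij, hek]
      linear_combination -hxy
    · apply ht j i hij.ne' ⟨k - d, by omega⟩
      simp only [if_neg hij.not_gt, Nat.add_sub_cancel' (not_lt.mp hkd), hek]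
      linear_combination hxy
  refine ⟨t, fun i j hij => ?_⟩
  rcases lt_or_gt_of_ne hij with h | h
  · exact key i j h
  · exact (key j i h).symm
end

section
/- Let p be an odd prime, and let V be the F_p-vector space of dimension k. Denote V^* = V \ {0} and put m = |V^*|/2 = (p^k - 1)/2. Suppose we are given m linear bases of V: (v_{1,1}, ..., v_{1,k}), (v_{2,1}, ..., v_{2,k}), ..., (v_{m,1}, ..., v_{m,k}). Then there exist 2m pairwise distinct elements x_1, ..., x_m, y_1, ..., y_m ∈ V^* and a map g : {1,...,m} → {1,...,k} such that y_i - x_i = v_{i,g(i)} for every i = 1, ..., m. -/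
/-- Chebyshev-type congruence. -/
lemma pvs_cheb {D : Type*} [CommRing D] (z y w : D) (hzy : z * y = 1)
    (hw : z + y = 2 + (z - y) ^ 2 * w) (n : ℕ) :
    ∃ h : D, z ^ n - y ^ n = (z - y) * (n + (z - y) ^ 2 * h) := by
  induction n using Nat.strong_induction_on with
  | _ n ih =>
    match n with
    | 0 => exact ⟨0, by simp⟩
    | 1 => exact ⟨0, by simp⟩
    | n + 2 =>
      obtain ⟨h0, e0⟩ := ih n (by omega)
      obtain ⟨h1, e1⟩ := ih (n + 1) (by omega)
      refine ⟨w * (n + 1 + (z - y) ^ 2 * h1) + 2 * h1 - h0, ?_⟩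
      have e : z ^ (n + 2) - y ^ (n + 2)
          = (z + y) * (z ^ (n + 1) - y ^ (n + 1)) - (z ^ n - y ^ n) := by
        linear_combination (y ^ n - z ^ n) * hzy
      rw [e, e0, e1, hw]
      push_cast
      ring

/-- valuation estimate -/
lemma pvs_val (p : ℕ) [hp : Fact p.Prime] (k m : ℕ) (hm : 2 * m + 1 = p ^ k) (r : ℕ) (hr0 : r ≠ 0)
    (hr : r ≤ m) :
    (p - 1) * padicValNat p m.factorial + 1 ≤
      2 * r + (p - 1) * padicValNat p (m - r).factorial := by
  have key : ∀ r, r ≤ m → padicValNat p m.factorial ≤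
      padicValNat p (m - r).factorial + padicValNat p (2 * r).factorial := by
    intro r
    induction r with
    | zero => intro _; simp
    | succ r ih =>
      intro h
      have h1 := ih (by omega)
      obtain ⟨t, ht⟩ : ∃ t, m - r = t + 1 := ⟨m - r - 1, by omega⟩
      have ht' : m - (r + 1) = t := by omega
      rw [ht] at h1
      rw [ht', show 2 * (r + 1) = 2 * r + 1 + 1 by ring]
      rw [Nat.factorial_succ, padicValNat.mul (by omega) (Nat.factorial_ne_zero _)] at h1
      rw [Nat.factorial_succ (2 * r + 1), Nat.factorial_succ (2 * r),
        padicValNat.mul (by omega) (by positivity),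
        padicValNat.mul (by omega) (Nat.factorial_ne_zero _)]
      have h2 : padicValNat p (t + 1) ≤ padicValNat p (2 * r + 1) := by
        rw [← padicValNat_dvd_iff_le (by omega)]
        have hd : p ^ padicValNat p (t + 1) ∣ t + 1 := pow_padicValNat_dvd
        have hk : padicValNat p (t + 1) ≤ k := by
          rw [← Nat.pow_le_pow_iff_right hp.out.one_lt]
          exact (Nat.le_of_dvd (by omega) hd).trans (by omega)
        have hd2 : p ^ padicValNat p (t + 1) ∣ 2 * (t + 1) + (2 * r + 1) := by
          have : 2 * (t + 1) + (2 * r + 1) = p ^ k := by omega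
          rw [this]; exact pow_dvd_pow _ hk
        exact (Nat.dvd_add_right (hd.mul_left 2)).1 hd2
      omega
  have h1 := key r hr
  have h2 := sub_one_mul_padicValNat_factorial_lt_of_ne_zero p (n := 2 * r) (by omega)
  have h3 := Nat.mul_le_mul_left (p - 1) h1
  rw [mul_add] at h3
  omega

/-- sums of invariant functions -/
lemma pvs_coset {G D : Type*} [Group G] [Fintype G] [CommRing D] (H : Subgroup G)
    (f : G → D) (hf : ∀ g, ∀ h ∈ H, f (g * h) = f g) :
    ((Nat.card H : ℕ) : D) ∣ ∑ g, f g := by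
  classical
  let F : (G ⧸ H) → D := Quotient.lift f (by
    intro a b hab
    have := QuotientGroup.leftRel_apply.1 hab
    have h2 := hf a _ this
    simpa using h2.symm)
  have hF : ∀ g, f g = F (g : G ⧸ H) := fun g => rfl
  have : ∑ g, f g = ∑ c : G ⧸ H, (Nat.card H : D) * F c := by
    rw [← Finset.sum_fiberwise_of_maps_to (s := Finset.univ) (t := Finset.univ)
      (g := fun g : G => (g : G ⧸ H)) (fun _ _ => Finset.mem_univ _)]
    refine Finset.sum_congr rfl fun c _ => ?_
    rw [Finset.sum_congr rfl (g := fun _ => F c)]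
    · rw [Finset.sum_const, nsmul_eq_mul]
      congr 2
      have h := QuotientGroup.card_preimage_mk H {c}
      rw [Nat.card_unique (α := ({c} : Set (G ⧸ H))), mul_one] at h
      rw [← h, Nat.card_eq_fintype_card, ← Set.toFinset_card]
      congr 1
      ext x
      simp
    · intro x hx
      rw [hF, (Finset.mem_filter.1 hx).2]
  rw [this, ← Finset.mul_sum]
  exact dvd_mul_right _ _

lemma pvs_perm {ι D : Type*} [Fintype ι] [DecidableEq ι] [CommRing D] (R : Finset ι)
    (f : Equiv.Perm ι → D)
    (hf : ∀ g h : Equiv.Perm ι, (∀ i ∈ R, h i = i) → f (g * h) = f g) :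
    (((Fintype.card ι - R.card).factorial : ℕ) : D) ∣ ∑ g, f g := by
  have h := pvs_coset (Equiv.Perm.ofSubtype (p := fun i => i ∉ R)).range f (by
    rintro g _ ⟨h, rfl⟩
    apply hf
    intro i hi
    exact Equiv.Perm.ofSubtype_apply_of_not_mem h (by simpa using hi))
  have hc : Nat.card (Equiv.Perm.ofSubtype (p := fun i => i ∉ R)).range =
      (Fintype.card ι - R.card).factorial := by
    rw [← Nat.card_congr (MonoidHom.ofInjective
      (Equiv.Perm.ofSubtype_injective (p := fun i => i ∉ R))).toEquiv,
      Nat.card_perm, Nat.card_eq_fintype_card, Fintype.card_subtype_compl]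
    simp
  rwa [hc] at h

/-- The permanent of a perturbation of a matrix with equal rows is nonzero. -/
lemma pvs_permanent {ι D : Type*} [Fintype ι] [DecidableEq ι] [CommRing D] [IsDomain D]
    (p : ℕ) [hp : Fact p.Prime] (k : ℕ) (hm : 2 * Fintype.card ι + 1 = p ^ k)
    (π : D) (hπ : Prime π) (hass : Associated (π ^ (p - 1)) (p : D))
    (β : ι → D) (hβ : ∀ b, ¬ π ∣ β b) (E : ι → ι → D) :
    ∑ τ : Equiv.Perm ι, ∏ i, (β (τ i) + π ^ 2 * E i (τ i)) ≠ 0 := by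
  intro h0
  set m := Fintype.card ι with hmdef
  set e := padicValNat p m.factorial with he
  have hdvdp : ∀ n : ℕ, π ^ ((p - 1) * padicValNat p n.factorial) ∣ ((n.factorial : ℕ) : D) := by
    intro n
    rw [pow_mul]
    refine (pow_dvd_pow_of_dvd hass.dvd _).trans ?_
    have : p ^ padicValNat p n.factorial ∣ n.factorial := pow_padicValNat_dvd
    exact_mod_cast Nat.cast_dvd_cast (α := D) this
  have hswap : ∑ τ : Equiv.Perm ι, ∏ i, (β (τ i) + π ^ 2 * E i (τ i)) =
      ∑ R : Finset ι, ∑ τ : Equiv.Perm ι,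
        (∏ i ∈ R, (π ^ 2 * E i (τ i))) * ∏ i ∈ Rᶜ, β (τ i) := by
    rw [Finset.sum_comm]
    refine Finset.sum_congr rfl fun τ _ => ?_
    simp_rw [add_comm (β _)]
    rw [Fintype.prod_add]
  have hterm : ∀ R : Finset ι, R ≠ ∅ → π ^ ((p - 1) * e + 1) ∣ ∑ τ : Equiv.Perm ι,
        (∏ i ∈ R, (π ^ 2 * E i (τ i))) * ∏ i ∈ Rᶜ, β (τ i) := by
    intro R hR
    have h1 : (((m - R.card).factorial : ℕ) : D) ∣ ∑ τ : Equiv.Perm ι,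
        (∏ i ∈ R, (E i (τ i))) * ∏ i ∈ Rᶜ, β (τ i) := by
      apply pvs_perm
      intro g h hh
      congr 1
      · refine Finset.prod_congr rfl fun i hi => ?_
        simp [hh i hi]
      · refine Finset.prod_equiv h ?_ ?_
        · intro i
          simp only [Finset.mem_compl, not_iff_not]
          constructor
          · intro hi; rwa [hh i hi]
          · intro hi
            have := hh _ hi
            rw [h.injective this] at hi
            exact hi
        · intro i _; rfl
    have h2 : ∑ τ : Equiv.Perm ι,
        (∏ i ∈ R, (π ^ 2 * E i (τ i))) * ∏ i ∈ Rᶜ, β (τ i) = π ^ (2 * R.card) *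
        ∑ τ : Equiv.Perm ι, (∏ i ∈ R, (E i (τ i))) * ∏ i ∈ Rᶜ, β (τ i) := by
      rw [Finset.mul_sum]
      refine Finset.sum_congr rfl fun τ _ => ?_
      rw [Finset.prod_mul_distrib, Finset.prod_const, pow_mul]
      ring
    rw [h2]
    have h3 := pvs_val p k m hm R.card (by simpa using hR) (Finset.card_le_univ R)
    refine (pow_dvd_pow π h3).trans ?_
    rw [pow_add]
    exact mul_dvd_mul_left _ ((hdvdp _).trans h1)
  have hempty : ∑ τ : Equiv.Perm ι,
        (∏ i ∈ (∅ : Finset ι), (π ^ 2 * E i (τ i))) * ∏ i ∈ (∅ : Finset ι)ᶜ, β (τ i)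
        = (m.factorial : D) * ∏ i, β i := by
    simp only [Finset.prod_empty, Finset.compl_empty, one_mul]
    rw [Finset.sum_congr rfl (fun τ _ => Equiv.prod_comp τ β)]
    simp [Fintype.card_perm, hmdef]
  have hdiv : π ^ ((p - 1) * e + 1) ∣ (m.factorial : D) * ∏ i, β i := by
    rw [hswap, ← Finset.add_sum_erase _ _ (Finset.mem_univ ∅), hempty] at h0
    rw [eq_neg_of_add_eq_zero_left h0, dvd_neg]
    exact Finset.dvd_sum fun R hR => hterm R (Finset.ne_of_mem_erase hR)
  obtain ⟨c, hc⟩ : p ^ e ∣ m.factorial := pow_padicValNat_dvd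
  have hpc : ¬ p ∣ c := by
    rintro ⟨d, rfl⟩
    have : p ^ (e + 1) ∣ m.factorial := ⟨d, by rw [hc]; ring⟩
    rw [padicValNat_dvd_iff_le (Nat.factorial_ne_zero _)] at this
    omega
  have hass' : Associated (π ^ ((p - 1) * e)) ((p : D) ^ e) := by
    rw [pow_mul]; exact hass.pow_pow
  obtain ⟨u, hu⟩ := hass'
  have hdiv2 : π ∣ u * c * ∏ i, β i := by
    rw [hc, pow_succ] at hdiv
    push_cast at hdiv
    rw [← hu, mul_assoc, mul_assoc] at hdiv
    have := (mul_dvd_mul_iff_left (pow_ne_zero _ hπ.ne_zero)).1 hdiv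
    rwa [← mul_assoc] at this
  rcases hπ.dvd_or_dvd hdiv2 with h | h
  · rcases hπ.dvd_or_dvd h with h | h
    · exact hπ.not_isUnit (isUnit_of_dvd_unit h u.isUnit)
    · have hcop : IsCoprime (p : ℤ) (c : ℤ) :=
        Nat.isCoprime_iff_coprime.2 ((Nat.Prime.coprime_iff_not_dvd hp.out).2 hpc)
      have hcop' := hcop.map (Int.castRingHom D)
      simp only [map_natCast] at hcop'
      have hp1 : p - 1 ≠ 0 := by have := hp.out.two_le; omega
      exact hπ.not_isUnit (hcop'.isUnit_of_dvd' ((dvd_pow_self π hp1).trans hass.dvd) h)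
  · obtain ⟨i, _, hi⟩ := (hπ.dvd_finsetProd_iff _).1 h
    exact hβ i hi

/-- Fourier step: a nonzero permanent produces a partition. -/
lemma pvs_fourier {ι V D : Type*} [Fintype ι] [DecidableEq ι] [AddCommGroup V] [Fintype V]
    [CommRing D] [IsDomain D] [CharZero D]
    (B : Option (ι × Bool) → AddChar V D) (hB : Function.Injective B)
    (hB0 : B none = 1)
    (hBn : ∀ i, B (some (i, true)) = (B (some (i, false)))⁻¹)
    (v : ι → V)
    (hper : ∑ τ : Equiv.Perm ι, ∏ i,
      (B (some (τ i, true)) (v i) - B (some (τ i, false)) (v i)) ≠ 0) :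
    ∃ x : ι → V, Function.Injective (fun c : Option (ι × Bool) =>
      c.elim 0 (fun ib => x ib.1 + if ib.2 then v ib.1 else 0)) := by
  classical
  by_contra hcon
  push Not at hcon
  let z : (ι → V) → Option (ι × Bool) → V := fun x c =>
      c.elim 0 (fun ib => x ib.1 + if ib.2 then v ib.1 else 0)
  have hdet : ∀ x, (Matrix.of (fun r c => B r (z x c))).det = 0 := by
    intro x
    have := hcon x
    rw [Function.not_injective_iff] at this
    obtain ⟨a, b, hab, hne⟩ := this
    exact Matrix.det_zero_of_column_eq hne (fun r => by
      simp only [Matrix.of_apply]; exact congrArg _ hab)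
  have hsum : ∑ x : ι → V, (Matrix.of (fun r c => B r (z x c))).det = 0 := by
    simp [hdet]
  let inv : Option (ι × Bool) → Option (ι × Bool) := fun c => c.map (fun ib => (ib.1, !ib.2))
  have hinvB : ∀ c, B (inv c) = (B c)⁻¹ := by
    rintro (_ | ⟨i, _ | _⟩)
    · simp [inv, hB0]
    · simp [inv, hBn]
    · simp [inv, hBn]
  let q : D := (Fintype.card V : D)
  have hq : q ≠ 0 := by
    simp only [q, ne_eq, Nat.cast_eq_zero]
    exact Fintype.card_ne_zero
  have horth : ∀ (c c' : Option (ι × Bool)) (i : ι), ∑ x : V, B c x * B c' (x + v i) =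
      if c' = inv c then q * B c' (v i) else 0 := by
    intro c c' i
    have h1 : ∀ x, B c x * B c' (x + v i) = (B c * B c') x * B c' (v i) := by
      intro x; rw [AddChar.map_add_eq_mul, AddChar.mul_apply]; ring
    simp_rw [h1]
    rw [← Finset.sum_mul, AddChar.sum_eq_ite]
    have h2 : (B c * B c' = 0) ↔ c' = inv c := by
      rw [← hB.eq_iff, hinvB, ← AddChar.one_eq_zero, mul_eq_one_iff_eq_inv, eq_comm,
        inv_eq_iff_eq_inv]
    by_cases h : c' = inv c
    · rw [if_pos (h2.2 h), if_pos h]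
    · rw [if_neg (fun h' => h (h2.1 h')), if_neg h, zero_mul]
  have hexp : ∑ x : ι → V, (Matrix.of (fun r c => B r (z x c))).det =
      ∑ σ : Equiv.Perm (Option (ι × Bool)), ((Equiv.Perm.sign σ : ℤ) : D) *
        ∏ i, (if σ (some (i, true)) = inv (σ (some (i, false))) then
          q * B (σ (some (i, true))) (v i) else 0) := by
    simp_rw [Matrix.det_apply']
    rw [Finset.sum_comm]
    refine Finset.sum_congr rfl fun σ _ => ?_
    rw [← Finset.mul_sum]
    congr 1
    simp_rw [← horth]
    rw [Finset.prod_univ_sum, Fintype.piFinset_univ]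
    refine Finset.sum_congr rfl fun x _ => ?_
    rw [Fintype.prod_option, Fintype.prod_prod_type]
    simp only [Matrix.of_apply, z, Option.elim, AddChar.map_zero_eq_one, one_mul]
    refine Finset.prod_congr rfl fun i _ => ?_
    rw [Fintype.prod_bool]
    simp [mul_comm]
  let Φ0 : Equiv.Perm ι × (ι → Equiv.Perm Bool) → Equiv.Perm (ι × Bool) := fun t =>
    (Equiv.prodCongrLeft (fun _ : Bool => t.1)) * (Equiv.prodCongrRight t.2)
  have hΦ0 : ∀ t i b, Φ0 t (i, b) = (t.1 i, t.2 i b) := fun t i b => rfl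
  let Φ : Equiv.Perm ι × (ι → Equiv.Perm Bool) → Equiv.Perm (Option (ι × Bool)) := fun t =>
    Equiv.optionCongr (Φ0 t)
  have hΦ : ∀ t i b, Φ t (some (i, b)) = some (t.1 i, t.2 i b) := fun t i b => rfl
  have hΦn : ∀ t, Φ t none = none := fun t => rfl
  have hsign : ∀ t, ((Equiv.Perm.sign (Φ t) : ℤ) : D) = ∏ i, ((Equiv.Perm.sign (t.2 i) : ℤ) : D) := by
    intro t
    simp only [Φ, Φ0, Equiv.optionCongr_sign, Equiv.Perm.sign_mul, Equiv.Perm.sign_prodCongrLeft,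
      Equiv.Perm.sign_prodCongrRight, Fintype.prod_bool, Int.units_mul_self, one_mul]
    push_cast
    rfl
  have hinj : Function.Injective Φ := by
    intro s t hst
    have h : ∀ i b, (s.1 i, s.2 i b) = (t.1 i, t.2 i b) := by
      intro i b
      have := congrArg (fun σ => σ (some (i, b))) hst
      simpa [hΦ] using this
    ext i
    · exact (Prod.ext_iff.1 (h i true)).1
    · rename_i b; exact (Prod.ext_iff.1 (h i b)).2
  have hsurj : ∀ σ : Equiv.Perm (Option (ι × Bool)),
      (∀ i, σ (some (i, true)) = inv (σ (some (i, false)))) → ∃ t, Φ t = σ := by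
    intro σ hσ
    have hii : ∀ c, inv (inv c) = c := by
      rintro (_ | ⟨i, b⟩) <;> simp [inv]
    have hσ' : ∀ i b, σ (some (i, !b)) = inv (σ (some (i, b))) := by
      intro i b
      cases b
      · simpa using hσ i
      · simp [hσ i, hii]
    have hnone : σ none = none := by
      by_contra hne
      obtain ⟨c, hc⟩ := σ.surjective (inv (σ none))
      rcases c with _ | ⟨i, b⟩
      · rcases h : σ none with _ | ⟨j, e⟩
        · exact hne h
        · rw [h] at hc
          simp [inv] at hc
      · have h1 := hσ' i b
        rw [hc, hii] at h1
        exact absurd (σ.injective h1) (by simp)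
    have hsome : ∀ i b, ∃ j e, σ (some (i, b)) = some (j, e) := by
      intro i b
      rcases h : σ (some (i, b)) with _ | ⟨j, e⟩
      · rw [← hnone] at h
        exact absurd (σ.injective h) (by simp)
      · exact ⟨j, e, rfl⟩
    choose τ e hτ using fun i => hsome i false
    have hτt : ∀ i, σ (some (i, true)) = some (τ i, !(e i)) := by
      intro i; rw [hσ i, hτ i]; simp [inv]
    have hall : ∀ i b, σ (some (i, b)) = some (τ i, xor b (e i)) := by
      intro i b; cases b
      · simp [hτ]
      · simp [hτt]
    have hτi : Function.Injective τ := by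
      intro i j hij
      by_cases h : e i = e j
      · have : σ (some (i, false)) = σ (some (j, false)) := by rw [hall, hall, hij, h]
        simpa using σ.injective this
      · have : σ (some (i, false)) = σ (some (j, true)) := by
          rw [hall, hall, hij]
          revert h
          cases e i <;> cases e j <;> simp
        have := σ.injective this
        simp at this
    have hτb : Function.Bijective τ := Finite.injective_iff_bijective.1 hτi
    refine ⟨⟨Equiv.ofBijective τ hτb, fun i => if e i then Equiv.swap false true else 1⟩, ?_⟩
    apply Equiv.ext
    rintro (_ | ⟨i, b⟩)
    · rw [hΦn, hnone]
    · rw [hΦ, hall]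
      congr 1
      ext
      · rfl
      · cases h : e i <;> cases b <;> simp [h]
  have hfinal : ∑ σ : Equiv.Perm (Option (ι × Bool)), ((Equiv.Perm.sign σ : ℤ) : D) *
        ∏ i, (if σ (some (i, true)) = inv (σ (some (i, false))) then
          q * B (σ (some (i, true))) (v i) else 0) =
      q ^ Fintype.card ι * ∑ τ : Equiv.Perm ι, ∏ i,
      (B (some (τ i, true)) (v i) - B (some (τ i, false)) (v i)) := by
    rw [← Finset.sum_subset (Finset.subset_univ (Finset.univ.image Φ))]
    · rw [Finset.sum_image (fun _ _ _ _ h => hinj h), Fintype.sum_prod_type, Finset.mul_sum]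
      refine Finset.sum_congr rfl fun τ _ => ?_
      have hb : ∀ (i : ι) , B (some (τ i, true)) (v i) - B (some (τ i, false)) (v i) =
          ∑ e : Equiv.Perm Bool, ((Equiv.Perm.sign e : ℤ) : D) * B (some (τ i, e true)) (v i) := by
        intro i
        have hu : (Finset.univ : Finset (Equiv.Perm Bool)) = {1, Equiv.swap false true} := by
          decide
        have hne : (1 : Equiv.Perm Bool) ≠ Equiv.swap false true := by decide
        rw [hu, Finset.sum_pair hne, Equiv.Perm.sign_swap (by decide)]
        simp
        ring
      simp_rw [hb]
      rw [Finset.prod_univ_sum, Fintype.piFinset_univ, Finset.mul_sum]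
      refine Finset.sum_congr rfl fun ε _ => ?_
      rw [hsign, Finset.prod_mul_distrib, mul_left_comm]
      congr 1
      rw [← Finset.card_univ, ← Finset.prod_const, ← Finset.prod_mul_distrib]
      refine Finset.prod_congr rfl fun i _ => ?_
      rw [if_pos]
      · rfl
      · rw [hΦ, hΦ]
        simp only [inv, Option.map_some, Option.some.injEq, Prod.mk.injEq, true_and]
        generalize ε i = s
        revert s
        decide
    · intro σ _ hσ
      have : ¬ ∀ i, σ (some (i, true)) = inv (σ (some (i, false))) := by
        intro h
        obtain ⟨t, ht⟩ := hsurj σ h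
        exact hσ (Finset.mem_image.2 ⟨t, Finset.mem_univ _, ht⟩)
      push Not at this
      obtain ⟨i, hi⟩ := this
      rw [Finset.prod_eq_zero (Finset.mem_univ i) (if_neg hi), mul_zero]
  rw [hexp, hfinal] at hsum
  rcases mul_eq_zero.1 hsum with h | h
  · exact pow_ne_zero _ hq h
  · exact hper h

lemma pvs_ring_aux (p : ℕ) [hp : Fact p.Prime] (hodd : Odd p) (k : ℕ)
    {R : Type} [CommRing R] [IsDomain R] [CharZero R] (z : R) (hzp : IsPrimitiveRoot z p)
    (hprime : Prime (z - 1)) (hassp : Associated ((z - 1) ^ (p - 1)) (p : R)) :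
    ∃ (D : Type) (_ : CommRing D) (_ : IsDomain D) (_ : CharZero D) (z y w : D) (θ : Fin k → D),
      z * y = 1 ∧ z ^ p = 1 ∧ z + y = 2 + (z - y) ^ 2 * w ∧ Prime (z - y) ∧
      Associated ((z - y) ^ (p - 1)) (p : D) ∧
      ∀ b : Fin k → ℕ, (∃ s, ¬ p ∣ b s) → ¬ (z - y) ∣ ∑ s, θ s * (b s : D) := by
  classical
  let y : R := z ^ (p - 1)
  have hzy : z * y = 1 := by
    rw [← pow_succ', Nat.sub_add_cancel hp.out.one_le, hzp.pow_eq_one]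
  have hass2 : Associated (z - 1) (z ^ 2 - 1) :=
    hzp.associated_sub_one_pow_sub_one_of_coprime (Nat.coprime_two_left.2 hodd)
  have hass : Associated (z - 1) (z - y) := by
    refine hass2.trans ?_
    refine ⟨(Units.mkOfMulEqOne z y hzy)⁻¹, ?_⟩
    have : (((Units.mkOfMulEqOne z y hzy)⁻¹ : Rˣ) : R) = y := rfl
    rw [this]
    linear_combination z * hzy
  obtain ⟨u, hu⟩ := hass.symm
  have hπ : Prime (z - y) := hass.prime hprime
  have hassπ : Associated ((z - y) ^ (p - 1)) (p : R) := (hass.symm.pow_pow).trans hassp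
  let C : R →+* MvPolynomial (Fin k) R := MvPolynomial.C
  refine ⟨MvPolynomial (Fin k) R, inferInstance, inferInstance, inferInstance, C z, C y,
    C (y * u ^ 2), fun s => MvPolynomial.X s, ?_, ?_, ?_, ?_, ?_, ?_⟩
  · rw [← map_mul, hzy, map_one]
  · rw [← map_pow, hzp.pow_eq_one, map_one]
  · have : z + y = 2 + (z - y) ^ 2 * (y * u ^ 2) := by
      linear_combination (-(z - y) * u - z + 1) * y * hu + (2 - z) * hzy
    rw [← map_add, this]
    simp [C, map_ofNat]
  · rw [← map_sub]
    exact (MvPolynomial.prime_C_iff _).2 hπ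
  · rw [← map_sub, ← map_pow]
    have := hassπ.map C
    rwa [map_natCast] at this
  · rintro b ⟨s, hs⟩ hdvd
    rw [← map_sub] at hdvd
    have h1 := (MvPolynomial.C_dvd_iff_dvd_coeff _ _).1 hdvd (Finsupp.single s 1)
    have h2 : MvPolynomial.coeff (Finsupp.single s 1)
        (∑ t, (MvPolynomial.X t : MvPolynomial (Fin k) R) * (b t : MvPolynomial (Fin k) R))
        = (b s : R) := by
      rw [MvPolynomial.coeff_sum, Finset.sum_eq_single s]
      · have : (b s : MvPolynomial (Fin k) R) = MvPolynomial.C (b s : R) := (map_natCast _ _).symm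
        rw [this, mul_comm, MvPolynomial.coeff_C_mul]
        simp
      · intro t _ hts
        have : (b t : MvPolynomial (Fin k) R) = MvPolynomial.C (b t : R) := (map_natCast _ _).symm
        rw [this, mul_comm, MvPolynomial.coeff_C_mul, MvPolynomial.coeff_X, if_neg, mul_zero]
        intro h
        exact hts (Finsupp.single_left_injective one_ne_zero h)
      · simp
    rw [h2] at h1
    have hcop : IsCoprime (p : ℤ) (b s : ℤ) :=
      Nat.isCoprime_iff_coprime.2 ((Nat.Prime.coprime_iff_not_dvd hp.out).2 hs)
    have hcop' := hcop.map (Int.castRingHom R)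
    simp only [map_natCast] at hcop'
    have hp1 : p - 1 ≠ 0 := by have := hp.out.two_le; omega
    exact hπ.not_isUnit (hcop'.isUnit_of_dvd' ((dvd_pow_self _ hp1).trans hassπ.dvd) h1)

lemma pvs_ring (p : ℕ) [hp : Fact p.Prime] (hodd : Odd p) (k : ℕ) :
    ∃ (D : Type) (_ : CommRing D) (_ : IsDomain D) (_ : CharZero D) (z y w : D) (θ : Fin k → D),
      z * y = 1 ∧ z ^ p = 1 ∧ z + y = 2 + (z - y) ^ 2 * w ∧ Prime (z - y) ∧
      Associated ((z - y) ^ (p - 1)) (p : D) ∧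
      ∀ b : Fin k → ℕ, (∃ s, ¬ p ∣ b s) → ¬ (z - y) ∣ ∑ s, θ s * (b s : D) := by
  have : NeZero ((p : ℕ) : ℚ) := ⟨by exact_mod_cast hp.out.ne_zero⟩
  have hcyc : IsCyclotomicExtension {p} ℚ (CyclotomicField p ℚ) := CyclotomicField.isCyclotomicExtension p ℚ
  have hζ := IsCyclotomicExtension.zeta_spec p ℚ (CyclotomicField p ℚ)
  exact pvs_ring_aux p hodd k hζ.toInteger hζ.toInteger_isPrimitiveRoot hζ.zeta_sub_one_prime'
    (IsCyclotomicExtension.Rat.associated_zeta_sub_one_pow_prime p hζ)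

lemma pvs_half {W : Type*} [AddCommGroup W] [Fintype W] (h2 : ∀ c : W, -c = c → c = 0)
    (m : ℕ) (hm : 2 * m + 1 = Fintype.card W) :
    ∃ b : Fin m → W, Function.Bijective (fun c : Option (Fin m × Bool) =>
      c.elim 0 (fun ib => if ib.2 then -b ib.1 else b ib.1)) := by
  classical
  let e := Fintype.equivFin W
  let T := {c : W // e c < e (-c)}
  let F : Option (T × Bool) → W := fun c =>
      c.elim 0 (fun ib => if ib.2 then -(ib.1 : W) else (ib.1 : W))
  have hT0 : ∀ c : T, (c : W) ≠ 0 := by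
    rintro ⟨c, hc⟩ h
    simp only at h
    subst h
    simp at hc
  have hTT : ∀ c d : T, (c : W) ≠ -(d : W) := by
    rintro ⟨c, hc⟩ ⟨d, hd⟩ h
    simp only at h
    subst h
    rw [neg_neg] at hc
    exact lt_asymm hc hd
  have hF : Function.Bijective F := by
    constructor
    · rintro (_ | ⟨c, _ | _⟩) (_ | ⟨d, _ | _⟩) h
      · rfl
      · exact absurd h.symm (hT0 d)
      · exact absurd h.symm (neg_ne_zero.2 (hT0 d))
      · exact absurd h (hT0 c)
      · have : c = d := Subtype.ext h
        rw [this]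
      · exact absurd h (hTT c d)
      · exact absurd h (neg_ne_zero.2 (hT0 c))
      · exact absurd h.symm (hTT d c)
      · have : c = d := Subtype.ext (neg_injective h)
        rw [this]
    · intro c
      rcases lt_trichotomy (e c) (e (-c)) with h | h | h
      · exact ⟨some (⟨c, h⟩, false), rfl⟩
      · exact ⟨none, (h2 c (e.injective h).symm).symm⟩
      · exact ⟨some (⟨-c, by rwa [neg_neg]⟩, true), by simp [F]⟩
  have hcard : Fintype.card T = m := by
    have := Fintype.card_of_bijective hF
    simp only [Fintype.card_option, Fintype.card_prod, Fintype.card_bool] at this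
    omega
  let g : Fin m ≃ T := (Fintype.equivFinOfCardEq hcard).symm
  refine ⟨fun i => (g i : W), ?_⟩
  have := hF.comp (Equiv.optionCongr (Equiv.prodCongr g (Equiv.refl Bool))).bijective
  convert this using 1
  funext c
  rcases c with _ | ⟨i, b⟩ <;> rfl


lemma pvs_main (p : ℕ) [hp : Fact p.Prime] (hodd : Odd p)
    (k : ℕ) (V : Type*) [AddCommGroup V] [Module (ZMod p) V]
    [Module.Finite (ZMod p) V]
    (hdim : Module.finrank (ZMod p) V = k)
    (m : ℕ) (hm : 2 * m + 1 = p ^ k)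
    (v : Fin m → Module.Basis (Fin k) (ZMod p) V) :
    ∃ (x : Fin m → V) (g : Fin m → Fin k), Function.Injective
      (fun c : Option (Fin m × Bool) =>
        c.elim 0 (fun ib => x ib.1 + if ib.2 then v ib.1 (g ib.1) else 0)) := by
  classical
  obtain ⟨D, _, _, _, z, y, w, θ, hzy, hzp, hw, hπ, hass, hθ⟩ := pvs_ring p hodd k
  have hp3 : 2 ≤ p - 1 := by
    have := hp.out.two_le
    obtain ⟨t, ht⟩ := hodd
    omega
  have : Finite V := Module.finite_of_finite (ZMod p)
  let _ : Fintype V := Fintype.ofFinite V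
  have : Finite (Module.Dual (ZMod p) V) := Module.finite_of_finite (ZMod p)
  let _ : Fintype (Module.Dual (ZMod p) V) := Fintype.ofFinite (Module.Dual (ZMod p) V)
  have hcardW : Fintype.card (Module.Dual (ZMod p) V) = p ^ k := by
    rw [Module.card_eq_pow_finrank (K := ZMod p) (V := (Module.Dual (ZMod p) V)), ZMod.card, Subspace.dual_finrank_eq,
      hdim]
  have h2 : ∀ c : (Module.Dual (ZMod p) V), -c = c → c = 0 := by
    intro c hc
    have h : (2 : ZMod p) • c = 0 := by
      rw [two_smul]; nth_rewrite 1 [← hc]; simp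
    rcases smul_eq_zero.1 h with h | h
    · exfalso
      have h' : ((2 : ℕ) : ZMod p) = 0 := by exact_mod_cast h
      rw [ZMod.natCast_eq_zero_iff] at h'
      have := Nat.le_of_dvd (by norm_num) h'
      omega
    · exact h
  obtain ⟨f, hf⟩ := pvs_half h2 m (by rw [hcardW, hm])
  let F : Option (Fin m × Bool) → (Module.Dual (ZMod p) V) := fun c =>
      c.elim 0 (fun ib => if ib.2 then -f ib.1 else f ib.1)
  have hF : Function.Bijective F := hf
  have hf0 : ∀ j, f j ≠ 0 := by
    intro j h
    have : F (some (j, false)) = F none := h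
    simpa using hF.1 this
  let ψ : AddChar (ZMod p) D := AddChar.zmodChar p hzp
  have hψz : ∀ a : ZMod p, ψ a = z ^ a.val := fun a => rfl
  have hψy : ∀ a : ZMod p, ψ (-a) = y ^ a.val := by
    intro a
    have h1 : ψ a * ψ (-a) = 1 := by rw [← AddChar.map_add_eq_mul]; simp
    have h3 : ψ a * y ^ a.val = 1 := by rw [hψz, ← mul_pow, hzy, one_pow]
    have : ψ a ≠ 0 := fun h => by rw [h, zero_mul] at h3; exact zero_ne_one h3
    exact mul_left_cancel₀ this (h1.trans h3.symm)
  have hz1 : z ≠ 1 := by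
    intro h
    rw [h, one_mul] at hzy
    rw [h, hzy] at hπ
    simp at hπ
  have hψ1 : ∀ a : ZMod p, ψ a = 1 → a = 0 := by
    intro a ha
    by_contra hne
    apply hz1
    have h1 : ψ 1 = 1 := by
      have : (1 : ZMod p) = (a⁻¹).val • a := by
        rw [nsmul_eq_mul, ZMod.natCast_zmod_val, inv_mul_cancel₀ hne]
      rw [this, AddChar.map_nsmul_eq_pow, ha, one_pow]
    have : Fact (1 < p) := ⟨hp.out.one_lt⟩
    rw [hψz, ZMod.val_one, pow_one] at h1
    exact h1
  let B : Option (Fin m × Bool) → AddChar V D := fun c =>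
    ψ.compAddMonoidHom (F c).toAddMonoidHom
  have hBapp : ∀ c x, B c x = ψ (F c x) := fun c x => rfl
  have hBinj : Function.Injective B := by
    intro c d h
    apply hF.1
    ext x
    have h1 : ψ (F c x) = ψ (F d x) := by rw [← hBapp, ← hBapp, h]
    rw [← sub_eq_zero]
    apply hψ1
    rw [sub_eq_add_neg, AddChar.map_add_eq_mul, h1, ← AddChar.map_add_eq_mul]
    simp
  have hB0 : B none = 1 := by
    ext x
    simp [hBapp, F]
  have hBn : ∀ i, B (some (i, true)) = (B (some (i, false)))⁻¹ := by
    intro i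
    ext x
    rw [AddChar.inv_apply, hBapp, hBapp, map_neg]
    rfl
  -- the entries
  have hN : ∀ j x, ∃ h : D, B (some (j, true)) x - B (some (j, false)) x =
      -((z - y) * (((f j x).val : D) + (z - y) ^ 2 * h)) := by
    intro j x
    obtain ⟨h, hh⟩ := pvs_cheb z y w hzy hw (f j x).val
    refine ⟨h, ?_⟩
    have e1 : B (some (j, true)) x = y ^ (f j x).val := by
      rw [← hψy]; rfl
    have e2 : B (some (j, false)) x = z ^ (f j x).val := rfl
    rw [← hh, e1, e2]; ring
  choose h hh using hN
  let e : Module.Basis (Fin k) (ZMod p) V := Module.finBasisOfFinrankEq (ZMod p) V hdim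
  let β : Fin m → D := fun j => ∑ s, θ s * ((f j (e s)).val : D)
  have hβ : ∀ j, ¬ (z - y) ∣ β j := by
    intro j
    refine hθ (fun s => (f j (e s)).val) ?_
    by_contra hcon
    push Not at hcon
    apply hf0 j
    apply e.ext
    intro s
    have h1 := (ZMod.natCast_eq_zero_iff _ p).2 (hcon s)
    simpa using h1
  let c : Fin m → Fin k → D := fun i g => -∑ s, θ s * (((v i).repr (e s) g).val : D)
  obtain ⟨P, hP⟩ : (z - y) ^ 2 ∣ (p : D) := (pow_dvd_pow _ hp3).trans hass.dvd
  have hcong : ∀ i j s, ∃ d : D, ∑ g, (((v i).repr (e s) g).val : D) * ((f j (v i g)).val : D) =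
      ((f j (e s)).val : D) + (z - y) ^ 2 * d := by
    intro i j s
    have h1 : ((∑ g, (((v i).repr (e s) g).val : ℤ) * ((f j (v i g)).val : ℤ) -
        ((f j (e s)).val : ℤ) : ℤ) : ZMod p) = 0 := by
      push_cast
      simp only [ZMod.natCast_zmod_val]
      rw [sub_eq_zero]
      conv_rhs => rw [← (v i).sum_repr (e s), map_sum]
      simp
    rw [ZMod.intCast_zmod_eq_zero_iff_dvd] at h1
    obtain ⟨d, hd⟩ := h1
    refine ⟨P * d, ?_⟩
    have h3 := congrArg (Int.cast : ℤ → D) hd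
    push_cast at h3
    linear_combination h3 + (d : D) * hP
  choose d hd using hcong
  have hM : ∀ i j, ∑ g, c i g * (B (some (j, true)) (v i g) - B (some (j, false)) (v i g)) =
      (z - y) * (β j + (z - y) ^ 2 * ((∑ s, θ s * d i j s) +
        ∑ g, (∑ s, θ s * (((v i).repr (e s) g).val : D)) * h j (v i g))) := by
    intro i j
    have h1 : ∑ g, (∑ s, θ s * (((v i).repr (e s) g).val : D)) * ((f j (v i g)).val : D) =
        β j + (z - y) ^ 2 * ∑ s, θ s * d i j s := by
      simp_rw [Finset.sum_mul]
      rw [Finset.sum_comm, Finset.mul_sum, ← Finset.sum_add_distrib]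
      refine Finset.sum_congr rfl fun s _ => ?_
      simp_rw [mul_assoc]
      rw [← Finset.mul_sum, hd]
      ring
    rw [mul_add ((z - y) ^ 2), ← add_assoc, ← h1, Finset.mul_sum, ← Finset.sum_add_distrib, Finset.mul_sum]
    refine Finset.sum_congr rfl fun g _ => ?_
    rw [hh]
    simp only [c]
    ring
  have hne : ∑ τ : Equiv.Perm (Fin m), ∏ i, ∑ g,
      c i g * (B (some (τ i, true)) (v i g) - B (some (τ i, false)) (v i g)) ≠ 0 := by
    simp_rw [hM, Finset.prod_mul_distrib]
    rw [← Finset.mul_sum]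
    refine mul_ne_zero (Finset.prod_ne_zero_iff.2 fun _ _ => hπ.ne_zero) ?_
    exact pvs_permanent p k (by simpa using hm) (z - y) hπ hass β hβ
      (fun i j => ((∑ s, θ s * d i j s) +
        ∑ g, (∑ s, θ s * (((v i).repr (e s) g).val : D)) * h j (v i g)))
  have hex : ∃ g : Fin m → Fin k, ∑ τ : Equiv.Perm (Fin m), ∏ i,
      (B (some (τ i, true)) (v i (g i)) - B (some (τ i, false)) (v i (g i))) ≠ 0 := by
    by_contra hcon
    push Not at hcon
    apply hne
    simp_rw [Finset.prod_univ_sum, Fintype.piFinset_univ]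
    rw [Finset.sum_comm]
    refine Finset.sum_eq_zero fun g _ => ?_
    simp_rw [Finset.prod_mul_distrib]
    rw [← Finset.mul_sum, hcon, mul_zero]
  obtain ⟨g, hg⟩ := hex
  obtain ⟨x, hx⟩ := pvs_fourier B hBinj hB0 hBn (fun i => v i (g i)) hg
  exact ⟨x, g, hx⟩


/-- Partition of the nonzero elements of a `k`-dimensional
vector space over `F_p` (p an odd prime) into pairs whose differences are
chosen among prescribed bases. -/
theorem partition_vector_space_pairs (p : ℕ) (hp : p.Prime) (hodd : Odd p)
    (k : ℕ) (V : Type*) [AddCommGroup V] [Module (ZMod p) V]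
    [Module.Finite (ZMod p) V]
    (hdim : Module.finrank (ZMod p) V = k)
    (m : ℕ) (hm : m = (p ^ k - 1) / 2)
    (v : Fin m → Fin k → V)
    (hv : ∀ i, LinearIndependent (ZMod p) (v i) ∧
      Submodule.span (ZMod p) (Set.range (v i)) = ⊤) :
    ∃ (x y : Fin m → V) (g : Fin m → Fin k),
      (∀ i, x i ≠ 0) ∧ (∀ i, y i ≠ 0) ∧
      Function.Injective (Sum.elim x y) ∧
      ∀ i, y i - x i = v i (g i) := by
  have : Fact p.Prime := ⟨hp⟩
  have hm' : 2 * m + 1 = p ^ k := by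
    obtain ⟨t, ht⟩ := hodd.pow (n := k)
    omega
  obtain ⟨x, g, hx⟩ := pvs_main p hodd k V hdim m hm'
    (fun i => Module.Basis.mk (hv i).1 (hv i).2.ge)
  simp only [Module.Basis.mk_apply] at hx
  refine ⟨x, fun i => x i + v i (g i), g, ?_, ?_, ?_, ?_⟩
  · intro i hi
    have := @hx (some (i, false)) none (by simpa using hi)
    simp at this
  · intro i hi
    have := @hx (some (i, true)) none (by simpa using hi)
    simp at this
  · rintro (i | i) (j | j) hij
    · have := @hx (some (i, false)) (some (j, false)) (by simpa using hij)
      simpa using this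
    · have := @hx (some (i, false)) (some (j, true)) (by simpa using hij)
      simp at this
    · have := @hx (some (i, true)) (some (j, false)) (by simpa using hij)
      simp at this
    · have := @hx (some (i, true)) (some (j, true)) (by simpa using hij)
      simpa using this
  · intro i
    simp
end

section
/- Let p be a prime, α a positive integer, and let A and B be nonempty subsets of ℤ/(p^α). Then |A + B| ≥ β_p(|A|, |B|), where β_p(r, s) is the smallest non-negative integer n such that p divides the binomial coefficient C(n, k) for all integers k in the range n - r < k < s. -/
open Pointwise

/-- `betaP p r s` is the smallest non-negative integer `n` such that `p`
divides the binomial coefficient `C(n, k)` for all integers `k` in the range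
`n - r < k < s`. -/
noncomputable def betaP (p r s : ℕ) : ℕ :=
  sInf {n : ℕ | ∀ k : ℕ, (n : ℤ) - (r : ℤ) < (k : ℤ) → k < s → p ∣ n.choose k}

lemma cdp_ring (N : ℕ) (hN : 0 < N) (p : ℕ) (hp : p.Prime) :
    ∃ (R : Type) (_ : CommRing R) (_ : IsDomain R) (ζ : R) (_ : IsPrimitiveRoot ζ N)
      (F : Type) (_ : Field F) (_ : CharP F p), Nonempty (R →+* F) := by
  have hz : IsPrimitiveRoot (Complex.exp (2 * Real.pi * Complex.I / N)) N :=
    Complex.isPrimitiveRoot_exp N hN.ne'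
  have hint := hz.isIntegral hN
  let R := integralClosure ℤ ℂ
  let z : R := ⟨_, hint⟩
  have hzR : IsPrimitiveRoot z N :=
    IsPrimitiveRoot.of_map_of_injective (f := R.val) hz Subtype.val_injective
  haveI : Fact p.Prime := ⟨hp⟩
  have hu : ¬ IsUnit (p : R) := by
    intro hu
    obtain ⟨u, hu⟩ := hu.exists_right_inv
    have h1 : IsIntegral ℤ (u : ℂ) := u.2
    have h2 : (u : ℂ) = algebraMap ℚ ℂ ((p : ℚ)⁻¹) := by
      have h3 : (p : ℂ) * (u : ℂ) = 1 := by
        have := congrArg (Subtype.val) hu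
        simpa using this
      rw [map_inv₀, map_natCast]
      exact eq_inv_of_mul_eq_one_right h3
    rw [h2] at h1
    have h4 : IsIntegral ℤ ((p : ℚ)⁻¹) :=
      (isIntegral_algebraMap_iff (algebraMap ℚ ℂ).injective).1 h1
    obtain ⟨m, hm⟩ := IsIntegrallyClosed.isIntegral_iff.1 h4
    have hp0 : (p : ℚ) ≠ 0 := by exact_mod_cast hp.ne_zero
    have h5 : (m : ℚ) * p = 1 := by
      rw [show (m : ℚ) = (p : ℚ)⁻¹ from by simpa using hm, inv_mul_cancel₀ hp0]
    have h6 : m * (p : ℤ) = 1 := by exact_mod_cast h5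
    have h7 : (p : ℤ) ∣ 1 := ⟨m, by rw [mul_comm, h6]⟩
    have h8 : p ∣ 1 := by exact_mod_cast h7
    exact hp.one_lt.ne' (Nat.dvd_one.1 h8)
  obtain ⟨M, hM, hpM⟩ := exists_max_ideal_of_mem_nonunits (a := (p : R)) hu
  letI := Ideal.Quotient.field M
  refine ⟨R, inferInstance, inferInstance, z, hzR, R ⧸ M, inferInstance, ?_,
    ⟨Ideal.Quotient.mk M⟩⟩
  refine (CharP.charP_iff_prime_eq_zero hp).2 ?_
  rw [← map_natCast (Ideal.Quotient.mk M), Ideal.Quotient.eq_zero_iff_mem]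
  exact hpM

open Polynomial in
lemma cdp_coeff {F : Type} [Field F] (p : ℕ) [CharP F p] (n r s : ℕ) (g h : F[X][X])
    (H : ((1 + C X) * (1 + X) - 1 : F[X][X]) ^ n = g * (C X) ^ r + h * X ^ s)
    (k : ℕ) (hk : n < k + r) (hks : k < s) : p ∣ n.choose k := by
  rcases lt_or_ge n k with hnk | hnk
  · simp [Nat.choose_eq_zero_of_lt hnk]
  have e : ((1 + C X) * (1 + X) - 1 : F[X][X]) = X * C (1 + X) + C X := by
    simp only [map_add, map_one]; ring
  rw [e, add_pow] at H
  have R1 : ((g * (C X) ^ r + h * X ^ s : F[X][X]).coeff k).coeff (n - k) = 0 := by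
    rw [← C_pow, coeff_add, coeff_mul_C, coeff_mul_X_pow', if_neg (by omega), add_zero,
      coeff_mul_X_pow', if_neg (by omega)]
  rw [← H, finsetSum_coeff, Finset.sum_eq_single k] at R1
  · rw [← CharP.cast_eq_zero_iff F p]
    rw [mul_pow, ← C_pow, ← C_pow, ← C_eq_natCast, coeff_mul_C, coeff_mul_C, coeff_mul_C,
      coeff_X_pow_self, one_mul, ← C_eq_natCast, coeff_mul_C, coeff_mul_X_pow', if_pos le_rfl,
      Nat.sub_self] at R1
    simpa [coeff_zero_eq_eval_zero] using R1
  · intro b _ hb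
    rw [mul_pow, ← C_pow, ← C_pow, ← C_eq_natCast, coeff_mul_C, coeff_mul_C, coeff_mul_C,
      coeff_X_pow, if_neg (Ne.symm hb)]
    simp
  · intro hh
    simp at hh; omega

/-- Cauchy–Davenport type bound for `ℤ/(p^α)`. -/
theorem cauchy_davenport_pow (p : ℕ) (hp : p.Prime) (α : ℕ) (hα : 0 < α)
    (A B : Finset (ZMod (p ^ α))) (hA : A.Nonempty) (hB : B.Nonempty) :
    betaP p A.card B.card ≤ (A + B).card := by
  classical
  have hN : 0 < p ^ α := pow_pos hp.pos α
  haveI : NeZero (p ^ α) := ⟨hN.ne'⟩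
  haveI : Fact p.Prime := ⟨hp⟩
  obtain ⟨R, _, _, ζ, hζ, F, _, _, ⟨φ⟩⟩ := cdp_ring (p ^ α) hN p hp
  have hφ : φ ζ = 1 := by
    have h1 : (φ ζ - 1) ^ (p ^ α) = 0 := by
      rw [sub_pow_char_pow, ← map_pow, hζ.pow_eq_one]; simp
    exact sub_eq_zero.1 (pow_eq_zero_iff hN.ne' |>.1 h1)
  let e : ZMod (p ^ α) → R := fun a => ζ ^ a.val - 1
  have he : Function.Injective e := by
    intro a b hab
    have : ζ ^ a.val = ζ ^ b.val := by simpa [e] using hab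
    exact ZMod.val_injective _ (hζ.pow_inj a.val_lt b.val_lt this)
  let S : Fin 2 → Finset R := ![A.image e, B.image e]
  let f : MvPolynomial (Fin 2) R := ∏ c ∈ A + B,
    ((1 + MvPolynomial.X 0) * (1 + MvPolynomial.X 1) - MvPolynomial.C (ζ ^ c.val))
  obtain ⟨h, -, hf⟩ := MvPolynomial.combinatorial_nullstellensatz_exists_linearCombination S
    (by intro i; fin_cases i <;> simp [S, hA, hB]) f (by
      intro x hx
      have h0 := hx 0
      have h1 := hx 1
      simp only [S, Matrix.cons_val_zero, Matrix.cons_val_one, Finset.mem_image] at h0 h1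
      obtain ⟨a, ha, ha'⟩ := h0
      obtain ⟨b, hb, hb'⟩ := h1
      simp only [f, map_prod]
      refine Finset.prod_eq_zero (Finset.add_mem_add ha hb) ?_
      simp only [map_sub, map_mul, map_add, map_one, MvPolynomial.eval_X, MvPolynomial.eval_C,
        ← ha', ← hb', e]
      rw [ZMod.val_add, ← pow_eq_pow_mod _ hζ.pow_eq_one, pow_add]
      ring)
  apply Nat.sInf_le
  intro k hk hks
  let ψ : MvPolynomial (Fin 2) R →+* Polynomial (Polynomial F) :=
    MvPolynomial.eval₂Hom ((Polynomial.C.comp Polynomial.C).comp φ)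
      ![Polynomial.C Polynomial.X, Polynomial.X]
  have H := congrArg ψ hf
  rw [Finsupp.linearCombination_apply, Finsupp.sum_fintype _ _ (by simp), Fin.sum_univ_two] at H
  refine cdp_coeff (F := F) p _ A.card B.card (ψ (h 0)) (ψ (h 1)) ?_ k (by omega) hks
  have hcA : (A.image e).card = A.card := Finset.card_image_of_injective _ he
  have hcB : (B.image e).card = B.card := Finset.card_image_of_injective _ he
  have eA : ∀ a, φ (e a) = 0 := by intro a; simp [e, hφ]
  simp only [f, S, smul_eq_mul, map_add, map_mul, map_prod, Matrix.cons_val_zero,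
    Matrix.cons_val_one, Finset.prod_image he.injOn] at H
  simpa [ψ, hφ, eA] using H
end
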